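/- Let $\Gamma$ be a (finite, simple, connected) distance-regular graph of diameter $D \ge 2$, and let $\Delta$ be an induced subgraph of $\Gamma$ on at least two vertices which is regular (as a graph) and such that any two vertices of $\Delta$ have distance at most two in $\Gamma$. For a nonzero real number $q$, let $\mathbb{D}_q$ be the $q$-distance matrix of $\Gamma$, that is, the real symmetric matrix indexed by the vertices of $\Gamma$ with entries $(\mathbb{D}_q)_{xy} = \sum_{j=0}^{d(x,y)-1} q^{-j}$ for $x \ne y$ and $(\mathbb{D}_q)_{xx} = 0$, where $d$ is the graph distance of $\Gamma$. If, for some real number $q < 0$, the matrix $\mathbb{D}_q$ has exactly one positive eigenvalue (counted with multiplicity), then the second largest eigenvalue $\lambda_2$ (counted with multiplicity) of the adjacency matrix of $\Delta$ satisfies $\lambda_2 \le -q - 1$. -/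

import Mathlib

/-- A finite graph `G` is distance-regular: it is connected, and for all `h, i, j` between `0` and
the diameter there is a constant `p = p^h_{ij}` such that any two vertices `x, y` at distance `h`
have exactly `p` vertices `z` with `d(x,z) = i` and `d(y,z) = j`. -/
structure IsDistanceRegular {V : Type*} [Fintype V] (G : SimpleGraph V) : Prop where
  connected : G.Connected
  inter : ∀ h i j : ℕ, h ≤ G.diam → i ≤ G.diam → j ≤ G.diam →
    ∃ p : ℕ, ∀ x y : V, G.dist x y = h →
      (Finset.univ.filter fun z : V => G.dist x z = i ∧ G.dist y z = j).card = p

/-- The `q`-distance matrix of `G`, with `(x,y)` entry `∑_{j=0}^{d(x,y)-1} q^{-j}`; the sum is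
empty on the diagonal. -/
noncomputable def qDistMatrix {V : Type*} (G : SimpleGraph V) (q : ℝ) : Matrix V V ℝ :=
  Matrix.of fun x y => ∑ j ∈ Finset.range (G.dist x y), q⁻¹ ^ j

theorem qDistMatrix_isHermitian {V : Type*} (G : SimpleGraph V) (q : ℝ) :
    (qDistMatrix G q).IsHermitian := by
  ext x y
  simp [qDistMatrix, SimpleGraph.dist_comm]

theorem adjMatrix_isHermitian {V : Type*} (G : SimpleGraph V) [DecidableRel G.Adj] :
    (G.adjMatrix ℝ).IsHermitian := by
  ext x y
  simp [SimpleGraph.adjMatrix_apply, SimpleGraph.adj_comm]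

/-- A real symmetric matrix has exactly one positive eigenvalue, counted with multiplicity. -/
def HasExactlyOnePosEigenvalue {n : Type*} [Fintype n] [DecidableEq n] {A : Matrix n n ℝ}
    (hA : A.IsHermitian) : Prop :=
  (Finset.univ.filter fun i : n => 0 < hA.eigenvalues i).card = 1

/-- The second largest eigenvalue, counted with multiplicity, of a real symmetric matrix of order
at least two (`eigenvalues₀` lists the eigenvalues with multiplicity in nonincreasing order,
starting from index `0`). -/
noncomputable def secondLargestEigenvalue {n : Type*} [Fintype n] [DecidableEq n]
    {A : Matrix n n ℝ} (hA : A.IsHermitian) (hn : 2 ≤ Fintype.card n) : ℝ :=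
  hA.eigenvalues₀ ⟨1, hn⟩

open Matrix in
theorem Matrix.IsHermitian.dotProduct_mulVec_comm {n : Type*} [Fintype n] {A : Matrix n n ℝ}
    (hA : A.IsHermitian) (x y : n → ℝ) : x ⬝ᵥ A *ᵥ y = y ⬝ᵥ A *ᵥ x := by
  have hT : Aᵀ = A := by simpa using hA.eq
  rw [dotProduct_mulVec, ← mulVec_transpose, hT, dotProduct_comm]

open Matrix in
/-- Expansion of a real quadratic form in an orthonormal basis of eigenvectors. -/
theorem Matrix.IsHermitian.dotProduct_mulVec_eq_sum_eigenvalues {n : Type*} [Fintype n]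
    [DecidableEq n] {A : Matrix n n ℝ} (hA : A.IsHermitian) (z : n → ℝ) :
    z ⬝ᵥ A *ᵥ z = ∑ i, hA.eigenvalues i * (z ⬝ᵥ (hA.eigenvectorBasis i).ofLp) ^ 2 := by
  have h := hA.eigenvectorBasis.sum_inner_mul_inner (WithLp.toLp 2 z) (WithLp.toLp 2 (A *ᵥ z))
  simp only [EuclideanSpace.inner_eq_star_dotProduct, star_trivial] at h
  rw [dotProduct_comm, ← h]
  refine Finset.sum_congr rfl fun i _ => ?_
  rw [dotProduct_comm (A *ᵥ z), hA.dotProduct_mulVec_comm, hA.mulVec_eigenvectorBasis,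
    dotProduct_smul, dotProduct_comm _ z, smul_eq_mul]
  ring

open Matrix in
theorem Matrix.IsHermitian.eigenvectorBasis_dotProduct {n : Type*} [Fintype n]
    [DecidableEq n] {A : Matrix n n ℝ} (hA : A.IsHermitian) (i j : n) :
    (hA.eigenvectorBasis i).ofLp ⬝ᵥ (hA.eigenvectorBasis j).ofLp = if i = j then 1 else 0 := by
  have h := orthonormal_iff_ite.mp hA.eigenvectorBasis.orthonormal i j
  rwa [EuclideanSpace.inner_eq_star_dotProduct, star_trivial, dotProduct_comm] at h

open Matrix in
/-- A symmetric form with exactly one positive eigenvalue is nonpositive on every vector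
conjugate to a vector on which the form is positive. -/
theorem HasExactlyOnePosEigenvalue.dotProduct_mulVec_nonpos {n : Type*} [Fintype n]
    [DecidableEq n] {A : Matrix n n ℝ} {hA : A.IsHermitian} (h : HasExactlyOnePosEigenvalue hA)
    {x y : n → ℝ} (hx : 0 < x ⬝ᵥ A *ᵥ x) (hxy : x ⬝ᵥ A *ᵥ y = 0) : y ⬝ᵥ A *ᵥ y ≤ 0 := by
  by_contra! hy
  obtain ⟨i₀, hi₀⟩ := Finset.card_eq_one.mp h
  have hneg : ∀ z : n → ℝ, z ⬝ᵥ (hA.eigenvectorBasis i₀).ofLp = 0 → z ⬝ᵥ A *ᵥ z ≤ 0 := by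
    intro z hz
    rw [hA.dotProduct_mulVec_eq_sum_eigenvalues]
    refine Finset.sum_nonpos fun i _ => ?_
    by_cases hi : i = i₀
    · simp [hi, hz]
    · have : ¬ 0 < hA.eigenvalues i := fun hp => hi (by
        have : i ∈ ({i₀} : Finset n) := hi₀ ▸ (by simpa using hp)
        simpa using this)
      exact mul_nonpos_of_nonpos_of_nonneg (not_lt.mp this) (sq_nonneg _)
  set e := (hA.eigenvectorBasis i₀).ofLp
  have hxe : x ⬝ᵥ e ≠ 0 := fun h0 => (hneg x h0).not_gt hx
  have hyx : y ⬝ᵥ A *ᵥ x = 0 := by rw [hA.dotProduct_mulVec_comm, hxy]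
  have h1 := hneg ((y ⬝ᵥ e) • x - (x ⬝ᵥ e) • y) (by
    simp only [sub_dotProduct, smul_dotProduct, smul_eq_mul]; ring)
  simp only [mulVec_sub, mulVec_smul, sub_dotProduct, dotProduct_sub, smul_dotProduct,
    dotProduct_smul, smul_eq_mul, hxy, hyx] at h1
  have h2 : 0 < (x ⬝ᵥ e) ^ 2 * (y ⬝ᵥ A *ᵥ y) := by positivity
  nlinarith [mul_nonneg (sq_nonneg (y ⬝ᵥ e)) hx.le]

open Matrix in
/-- One half of the Courant–Fischer principle for the second largest eigenvalue: it is bounded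
by any upper bound of the Rayleigh quotient on a hyperplane. -/
theorem secondLargestEigenvalue_le_of_hyperplane {n : Type*} [Fintype n] [DecidableEq n]
    {A : Matrix n n ℝ} (hA : A.IsHermitian) (hn : 2 ≤ Fintype.card n) (u : n → ℝ) {μ : ℝ}
    (h : ∀ y : n → ℝ, y ⬝ᵥ u = 0 → y ⬝ᵥ A *ᵥ y ≤ μ * (y ⬝ᵥ y)) :
    secondLargestEigenvalue hA hn ≤ μ := by
  set E : Fin (Fintype.card n) ≃ n := Fintype.equivOfCardEq (Fintype.card_fin _)
  set i := E ⟨0, by omega⟩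
  set j := E ⟨1, hn⟩
  have hij : i ≠ j := fun hc => by simpa using E.injective hc
  have hj : hA.eigenvalues j = secondLargestEigenvalue hA hn := by
    change hA.eigenvalues₀ (E.symm (E _)) = hA.eigenvalues₀ _
    rw [E.symm_apply_apply]
  have hi : secondLargestEigenvalue hA hn ≤ hA.eigenvalues i := by
    change hA.eigenvalues₀ _ ≤ hA.eigenvalues₀ (E.symm (E _))
    rw [E.symm_apply_apply]
    exact hA.eigenvalues₀_antitone (Nat.zero_le 1)
  set e := (hA.eigenvectorBasis i).ofLp with he
  set f := (hA.eigenvectorBasis j).ofLp with hf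
  have hee : e ⬝ᵥ e = 1 := by simp [he, hA.eigenvectorBasis_dotProduct]
  have hff : f ⬝ᵥ f = 1 := by simp [hf, hA.eigenvectorBasis_dotProduct]
  have hef : e ⬝ᵥ f = 0 := by simp [he, hf, hA.eigenvectorBasis_dotProduct, hij]
  have hfe : f ⬝ᵥ e = 0 := by rw [dotProduct_comm, hef]
  have hAe : A *ᵥ e = hA.eigenvalues i • e := hA.mulVec_eigenvectorBasis i
  have hAf : A *ᵥ f = hA.eigenvalues j • f := hA.mulVec_eigenvectorBasis j
  obtain ⟨a, b, hab, h0⟩ :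
      ∃ a b : ℝ, 0 < a ^ 2 + b ^ 2 ∧ a * (e ⬝ᵥ u) + b * (f ⬝ᵥ u) = 0 := by
    by_cases hc : e ⬝ᵥ u = 0
    · exact ⟨1, 0, by norm_num, by simp [hc]⟩
    · have := sq_pos_of_ne_zero hc
      exact ⟨f ⬝ᵥ u, -(e ⬝ᵥ u), by nlinarith [sq_nonneg (f ⬝ᵥ u)], by ring⟩
  have key := h (a • e + b • f) (by simpa [add_dotProduct] using h0)
  simp only [mulVec_add, mulVec_smul, hAe, hAf, add_dotProduct, dotProduct_add, smul_dotProduct,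
    dotProduct_smul, smul_eq_mul, hee, hff, hef, hfe, hj] at key
  have := mul_le_mul_of_nonneg_left hi (sq_nonneg a)
  by_contra! hlt
  nlinarith [mul_lt_mul_of_pos_left hlt hab]

theorem SimpleGraph.Connected.exists_adj_adj_dist_eq_two {V : Type*} [Finite V]
    {G : SimpleGraph V} (hG : G.Connected) (hD : 2 ≤ G.diam) :
    ∃ x y z, G.Adj x y ∧ G.Adj y z ∧ G.dist x z = 2 := by
  have := hG.nonempty
  obtain ⟨u, v, huv⟩ := G.exists_dist_eq_diam
  obtain ⟨p, hp⟩ := hG.exists_walk_length_eq_dist u v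
  match p, hp with
  | .nil, hp => rw [SimpleGraph.dist_self] at huv; omega
  | .cons _ .nil, hp => simp at hp; omega
  | .cons (v := y) h₁ (.cons (v := z) h₂ p'), hp =>
    refine ⟨u, y, z, h₁, h₂, ?_⟩
    have h3 := SimpleGraph.dist_le (.cons h₁ (.cons h₂ .nil) : G.Walk u z)
    have h4 := hG.dist_triangle (u := u) (v := z) (w := v)
    have h5 := SimpleGraph.dist_le p'
    simp only [SimpleGraph.Walk.length_cons, SimpleGraph.Walk.length_nil] at h3 hp
    omega

theorem qDistMatrix_self {V : Type*} (G : SimpleGraph V) (q : ℝ) (x : V) :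
    qDistMatrix G q x x = 0 := by simp [qDistMatrix]

theorem qDistMatrix_of_adj {V : Type*} {G : SimpleGraph V} (q : ℝ) {x y : V} (h : G.Adj x y) :
    qDistMatrix G q x y = 1 := by simp [qDistMatrix, SimpleGraph.dist_eq_one_iff_adj.mpr h]

theorem qDistMatrix_of_dist_eq_two {V : Type*} {G : SimpleGraph V} (q : ℝ) {x y : V}
    (h : G.dist x y = 2) : qDistMatrix G q x y = 1 + q⁻¹ := by
  simp [qDistMatrix, h, Finset.sum_range_succ]

theorem qDistMatrix_nonneg {V : Type*} (G : SimpleGraph V) {q : ℝ} (hq : q ≤ -1) (x y : V) :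
    0 ≤ qDistMatrix G q x y := by
  have hneg : q⁻¹ < 0 := inv_lt_zero.mpr (by linarith)
  have habs : |q⁻¹| ≤ 1 := by
    rw [abs_inv]
    exact inv_le_one_of_one_le₀ (by rw [abs_of_neg (by linarith)]; linarith)
  have hpow : q⁻¹ ^ G.dist x y ≤ 1 :=
    (le_abs_self _).trans (by rw [abs_pow]; exact pow_le_one₀ (abs_nonneg _) habs)
  have hgeom := mul_neg_geom_sum q⁻¹ (G.dist x y)
  change 0 ≤ ∑ j ∈ Finset.range (G.dist x y), q⁻¹ ^ j
  exact nonneg_of_mul_nonneg_right (by linarith) (by linarith : 0 < 1 - q⁻¹)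

/-- In a distance-regular graph, a function of the distance to a vertex has the same sum at every
vertex. -/
theorem IsDistanceRegular.exists_sum_dist_eq {V : Type*} [Fintype V] {G : SimpleGraph V}
    (hG : IsDistanceRegular G) (f : ℕ → ℝ) : ∃ c, ∀ x, ∑ y, f (G.dist x y) = c := by
  classical
  have := hG.connected.nonempty
  have hle : ∀ x y, G.dist x y ≤ G.diam := fun x y =>
    SimpleGraph.dist_le_diam (SimpleGraph.connected_iff_ediam_ne_top.mp hG.connected)
  choose! k hk using fun i hi => hG.inter 0 i i (Nat.zero_le _) hi hi
  refine ⟨∑ i ∈ Finset.range (G.diam + 1), k i * f i, fun x => ?_⟩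
  rw [← Finset.sum_fiberwise_of_maps_to (g := fun y => G.dist x y)
    (t := Finset.range (G.diam + 1)) (fun y _ => by simpa [Nat.lt_succ_iff] using hle x y)]
  refine Finset.sum_congr rfl fun i hi => ?_
  rw [Finset.sum_congr rfl (g := fun _ => f i) (fun y hy => by rw [(Finset.mem_filter.mp hy).2]),
    Finset.sum_const, nsmul_eq_mul]
  have hc := hk i (Nat.lt_succ_iff.mp (Finset.mem_range.mp hi)) x x (by simp)
  simp only [and_self] at hc
  rw [hc]

open Matrix in
/-- For `-1 < q < 0` a path with ends at distance two produces two positive eigenvalues. -/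
theorem HasExactlyOnePosEigenvalue.le_neg_one {V : Type*} [Fintype V] [DecidableEq V]
    {G : SimpleGraph V} (hG : G.Connected) (hD : 2 ≤ G.diam) {q : ℝ} (hq : q < 0)
    (hpos : HasExactlyOnePosEigenvalue (qDistMatrix_isHermitian G q)) : q ≤ -1 := by
  by_contra! hq1
  obtain ⟨x, y, z, hxy, hyz, hxz⟩ := hG.exists_adj_adj_dist_eq_two hD
  have hr : 1 + q⁻¹ < 0 := by
    have : q * (1 + q⁻¹) = q + 1 := by
      rw [mul_add, mul_inv_cancel₀ hq.ne, mul_one]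
    by_contra! hc
    nlinarith [mul_nonneg (neg_nonneg.mpr hq.le) hc]
  have hzx : G.dist z x = 2 := by rw [SimpleGraph.dist_comm, hxz]
  have h := hpos.dotProduct_mulVec_nonpos
    (x := Pi.single x 1 + Pi.single y (-q⁻¹) + Pi.single z 1)
    (y := Pi.single x 1 - Pi.single z 1)
    (by
      simp only [mulVec_add, add_dotProduct, dotProduct_add, mulVec_single, single_dotProduct,
        Pi.smul_apply, Matrix.col_apply, MulOpposite.smul_eq_mul_unop, MulOpposite.unop_op,
        qDistMatrix_self, qDistMatrix_of_adj q hxy, qDistMatrix_of_adj q hxy.symm,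
        qDistMatrix_of_adj q hyz, qDistMatrix_of_adj q hyz.symm,
        qDistMatrix_of_dist_eq_two q hxz, qDistMatrix_of_dist_eq_two q hzx]
      linarith)
    (by
      simp only [mulVec_sub, add_dotProduct, dotProduct_sub, mulVec_single, single_dotProduct,
        Pi.smul_apply, Matrix.col_apply, MulOpposite.smul_eq_mul_unop, MulOpposite.unop_op,
        qDistMatrix_self, qDistMatrix_of_adj q hxy.symm,
        qDistMatrix_of_adj q hyz,
        qDistMatrix_of_dist_eq_two q hxz, qDistMatrix_of_dist_eq_two q hzx]
      ring)
  simp only [mulVec_sub, sub_dotProduct, dotProduct_sub, mulVec_single, single_dotProduct,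
    Pi.smul_apply, Matrix.col_apply, MulOpposite.smul_eq_mul_unop, MulOpposite.unop_op,
    qDistMatrix_self, qDistMatrix_of_dist_eq_two q hxz, qDistMatrix_of_dist_eq_two q hzx] at h
  linarith

open Matrix in
/-- For `q ≤ -1` the all-ones vector spans the positive part of the `q`-distance form. -/
theorem IsDistanceRegular.qDistMatrix_nonpos_of_sum_eq_zero {V : Type*} [Fintype V]
    [DecidableEq V] {G : SimpleGraph V} (hG : IsDistanceRegular G) (hD : 2 ≤ G.diam) {q : ℝ}
    (hq : q ≤ -1) (hpos : HasExactlyOnePosEigenvalue (qDistMatrix_isHermitian G q))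
    {y : V → ℝ} (hy : ∑ v, y v = 0) : y ⬝ᵥ qDistMatrix G q *ᵥ y ≤ 0 := by
  obtain ⟨c, hc⟩ := hG.exists_sum_dist_eq fun d => ∑ j ∈ Finset.range d, q⁻¹ ^ j
  have hone : qDistMatrix G q *ᵥ 1 = c • 1 := by
    ext x
    simpa [mulVec, dotProduct, qDistMatrix] using hc x
  refine hpos.dotProduct_mulVec_nonpos (x := 1) ?_ ?_
  · obtain ⟨x, z, -, hxz, -, -⟩ := hG.connected.exists_adj_adj_dist_eq_two hD
    simp only [dotProduct, mulVec, Pi.one_apply, one_mul, mul_one]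
    refine Finset.sum_pos' (fun v _ => Finset.sum_nonneg fun w _ => qDistMatrix_nonneg G hq v w)
      ⟨x, Finset.mem_univ _, Finset.sum_pos' (fun w _ => qDistMatrix_nonneg G hq x w)
        ⟨z, Finset.mem_univ _, ?_⟩⟩
    rw [qDistMatrix_of_adj q hxz]
    exact one_pos
  · rw [(qDistMatrix_isHermitian G q).dotProduct_mulVec_comm, hone, dotProduct_smul,
      dotProduct_one, hy, smul_zero]

open Matrix in
/-- Extending a vector by zero along an injection restricts a quadratic form to the principal
submatrix. -/
theorem Matrix.extend_dotProduct_mulVec_extend {m n : Type*} [Fintype m] [Fintype n]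
    {f : m → n} (hf : f.Injective) (A : Matrix n n ℝ) (y : m → ℝ) :
    Function.extend f y 0 ⬝ᵥ A *ᵥ Function.extend f y 0 = y ⬝ᵥ A.submatrix f f *ᵥ y := by
  have hz : ∀ v, v ∉ Set.range f → Function.extend f y 0 v = 0 := fun v hv =>
    Function.extend_apply' _ _ _ hv
  refine (Fintype.sum_of_injective f hf _ _ (fun v hv => by simp [hz v hv]) fun i => ?_).symm
  rw [hf.extend_apply]
  congr 1
  refine Fintype.sum_of_injective f hf _ _ (fun v hv => by simp [hz v hv]) fun j => ?_
  rw [hf.extend_apply]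
  rfl

/-- On a set of vertices at mutual distance at most two, the `q`-distance matrix is a combination
of the all-ones, identity and adjacency matrices. -/
theorem SimpleGraph.Connected.qDistMatrix_submatrix_eq {V : Type*} [DecidableEq V]
    {G : SimpleGraph V} [DecidableRel G.Adj] (hG : G.Connected) {S : Set V}
    (hdist : ∀ x ∈ S, ∀ y ∈ S, G.dist x y ≤ 2) {q : ℝ} :
    (qDistMatrix G q).submatrix ((↑) : S → V) (↑) =
      (1 + q⁻¹) • (Matrix.of (fun _ _ => 1) - 1) - q⁻¹ • (G.induce S).adjMatrix ℝ := by
  ext s t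
  have hd := hdist s s.2 t t.2
  by_cases hst : s = t
  · subst hst
    simp [qDistMatrix_self]
  have hpos : 0 < G.dist s t := hG.pos_dist_of_ne fun h => hst (Subtype.ext h)
  by_cases hadj : G.Adj s t
  · simp [qDistMatrix_of_adj q hadj, hst, hadj]
  · have h2 : G.dist s t = 2 := by
      have := mt SimpleGraph.dist_eq_one_iff_adj.mp hadj
      omega
    simp [qDistMatrix_of_dist_eq_two q h2, hst, hadj]

open Matrix in
theorem stmt16 {V : Type*} [Fintype V] [DecidableEq V] (G : SimpleGraph V) [DecidableRel G.Adj]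
    (hG : IsDistanceRegular G) (hD : 2 ≤ G.diam)
    (S : Set V) [Fintype S] (hS : 2 ≤ Fintype.card S)
    (hreg : ∃ d : ℕ, (G.induce S).IsRegularOfDegree d)
    (hdist : ∀ x ∈ S, ∀ y ∈ S, G.dist x y ≤ 2)
    (q : ℝ) (hq : q < 0)
    (hpos : HasExactlyOnePosEigenvalue (qDistMatrix_isHermitian G q)) :
    secondLargestEigenvalue (adjMatrix_isHermitian (G.induce S)) hS ≤ -q - 1 := by
  have hq1 : q ≤ -1 := hpos.le_neg_one hG.connected hD hq
  refine secondLargestEigenvalue_le_of_hyperplane _ hS 1 fun y hy => ?_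
  have hsum : ∑ v, Function.extend ((↑) : S → V) y 0 v = 0 := by
    rw [← Fintype.sum_of_injective ((↑) : S → V) Subtype.val_injective y
      (Function.extend ((↑) : S → V) y 0)
      (fun v hv => Function.extend_apply' _ _ _ hv)
      (fun s => (Subtype.val_injective.extend_apply _ _ _).symm), ← dotProduct_one, hy]
  have h := hG.qDistMatrix_nonpos_of_sum_eq_zero hD hq1 hpos hsum
  have hJ : (Matrix.of (fun _ _ => 1) : Matrix S S ℝ) *ᵥ y = 0 := by
    ext s
    rw [dotProduct_one] at hy
    simpa [mulVec, dotProduct] using hy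
  rw [extend_dotProduct_mulVec_extend Subtype.val_injective,
    hG.connected.qDistMatrix_submatrix_eq hdist, sub_mulVec, smul_mulVec, smul_mulVec,
    sub_mulVec, hJ, one_mulVec, zero_sub, dotProduct_sub, dotProduct_smul, dotProduct_smul,
    dotProduct_neg, smul_eq_mul, smul_eq_mul] at h
  have h' := mul_nonneg_of_nonpos_of_nonpos hq.le h
  have hq0 : q ≠ 0 := hq.ne
  field_simp at h'
  linarith
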